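/- Let R be a commutative ring, 𝔞 an ideal, M a finitely presented R-module, and N an R-module. Then Γ_𝔞(M,N) ≅ Hom_R(M, Γ_𝔞(N)), where Γ_𝔞(M,N) = colim_k Hom_R(M/𝔞^k M, N) and Γ_𝔞(N) = colim_k Hom_R(R/𝔞^k, N). -/

import Mathlib

/-!
Both modules embed in `M →ₗ[R] N`, and the proof shows that they have the same image.

Composing with the projections `M → M ⧸ 𝔞^k M` identifies `Γ_𝔞(M, N)` with the homomorphisms
`M → N` killed by some power of `𝔞` (`gammaToHom_injective`, `mem_range_gammaToHom`). For `M = R`,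
evaluation at `1` then identifies `Γ_𝔞(N)` with the submodule of those `n : N` killed by some power
of `𝔞` (`gammaToModule_injective`, `mem_range_gammaToModule`), so that `M →ₗ[R] Γ_𝔞(N)` becomes the
module of homomorphisms `f : M → N` all of whose values are killed by some power of `𝔞`, where the
power may depend on the value. As `M` is finitely generated, the largest of the powers belonging to
the generators kills `f` itself.
-/

open TensorProduct

/-- The projection `M ⧸ 𝔞^l M → M ⧸ 𝔞^k M` for `k ≤ l`. -/
def quotPowProj {R : Type*} [CommRing R] (𝔞 : Ideal R) (M : Type*) [AddCommGroup M]
    [Module R M] (k l : ℕ) (h : k ≤ l) :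
    (M ⧸ ((𝔞 ^ l) • ⊤ : Submodule R M)) →ₗ[R] (M ⧸ ((𝔞 ^ k) • ⊤ : Submodule R M)) :=
  Submodule.mapQ _ _ LinearMap.id
    (by simpa using Submodule.smul_mono_left (Ideal.pow_le_pow_right h))

section

variable {R : Type*} [CommRing R] (𝔞 : Ideal R) (M N : Type*) [AddCommGroup M] [Module R M]
  [AddCommGroup N] [Module R N]

/-- The module `Γ_𝔞(M, N) = colim_k Hom_R(M ⧸ 𝔞^k M, N)`. -/
abbrev Gamma :=
  Module.DirectLimit (fun k : ℕ => (M ⧸ ((𝔞 ^ k) • ⊤ : Submodule R M)) →ₗ[R] N)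
    (fun k l h => LinearMap.lcomp R N (quotPowProj 𝔞 M k l h))

/-- The map `Γ_𝔞(M, N) → Hom_R(M, N)` induced by composition with the projections
`M → M ⧸ 𝔞^k M`. -/
noncomputable def gammaToHom : Gamma 𝔞 M N →ₗ[R] (M →ₗ[R] N) :=
  Module.DirectLimit.lift R ℕ _ _
    (fun k => LinearMap.lcomp R N (Submodule.mkQ ((𝔞 ^ k) • ⊤ : Submodule R M)))
    (by intro k l h f; rfl)

lemma gammaToHom_of (k : ℕ) (f : (M ⧸ ((𝔞 ^ k) • ⊤ : Submodule R M)) →ₗ[R] N) :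
    gammaToHom 𝔞 M N (Module.DirectLimit.of R ℕ _ _ k f) = f ∘ₗ Submodule.mkQ _ :=
  Module.DirectLimit.lift_of _ _ _

lemma gammaToHom_injective : Function.Injective (gammaToHom 𝔞 M N) := by
  refine Module.DirectLimit.lift_injective _ _ fun k f g h => ?_
  exact Submodule.linearMap_qext _ h

lemma mem_range_gammaToHom (f : M →ₗ[R] N) :
    f ∈ LinearMap.range (gammaToHom 𝔞 M N) ↔ ∃ k : ℕ, ∀ a ∈ 𝔞 ^ k, ∀ m, a • f m = 0 := by
  constructor
  · rintro ⟨x, rfl⟩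
    obtain ⟨k, g, rfl⟩ := Module.DirectLimit.exists_of x
    refine ⟨k, fun a ha m => ?_⟩
    rw [gammaToHom_of, ← map_smul, LinearMap.comp_apply, Submodule.mkQ_apply,
      (Submodule.Quotient.mk_eq_zero _).2 (Submodule.smul_mem_smul ha Submodule.mem_top), map_zero]
  · rintro ⟨k, hk⟩
    have h : ((𝔞 ^ k) • ⊤ : Submodule R M) ≤ LinearMap.ker f :=
      Submodule.smul_le.2 fun a ha m _ => by rw [LinearMap.mem_ker, map_smul, hk a ha m]
    exact ⟨Module.DirectLimit.of R ℕ _ _ k (Submodule.liftQ _ f h), by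
      rw [gammaToHom_of, Submodule.liftQ_mkQ]⟩

/-- The map `Γ_𝔞(N) = Γ_𝔞(R, N) → N` induced by evaluation at `1`. -/
noncomputable def gammaToModule : Gamma 𝔞 R N →ₗ[R] N :=
  LinearMap.applyₗ (1 : R) ∘ₗ gammaToHom 𝔞 R N

lemma gammaToModule_injective : Function.Injective (gammaToModule 𝔞 N) := fun _ _ h =>
  gammaToHom_injective 𝔞 R N (LinearMap.ext_ring h)

lemma mem_range_gammaToModule (n : N) :
    n ∈ LinearMap.range (gammaToModule 𝔞 N) ↔ ∃ k : ℕ, ∀ a ∈ 𝔞 ^ k, a • n = 0 := by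
  constructor
  · rintro ⟨x, rfl⟩
    obtain ⟨k, hk⟩ := (mem_range_gammaToHom 𝔞 R N _).1 ⟨x, rfl⟩
    exact ⟨k, fun a ha => hk a ha 1⟩
  · rintro ⟨k, hk⟩
    obtain ⟨x, hx⟩ := (mem_range_gammaToHom 𝔞 R N (LinearMap.toSpanSingleton R N n)).2
      ⟨k, fun a ha r => by
        rw [LinearMap.toSpanSingleton_apply, smul_comm, hk a ha, smul_zero]⟩
    refine ⟨x, ?_⟩
    change gammaToHom 𝔞 R N x 1 = n
    rw [hx, LinearMap.toSpanSingleton_apply, one_smul]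

/-- For finitely generated `M`, a power of `𝔞` killing `f` can be chosen uniformly as soon as each
value of `f` is killed by some power. -/
lemma exists_pow_smul_eq_zero [Module.Finite R M] (f : M →ₗ[R] N)
    (hf : ∀ m, ∃ k : ℕ, ∀ a ∈ 𝔞 ^ k, a • f m = 0) :
    ∃ k : ℕ, ∀ a ∈ 𝔞 ^ k, ∀ m, a • f m = 0 := by
  choose k hk using hf
  obtain ⟨S, hS⟩ := Module.Finite.fg_top (R := R) (M := M)
  refine ⟨S.sup k, fun a ha m => ?_⟩
  have hm : m ∈ Submodule.span R (S : Set M) := hS ▸ Submodule.mem_top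
  have hle : Submodule.span R (S : Set M) ≤ LinearMap.ker (a • f) :=
    Submodule.span_le.2 fun s hs => hk s a (Ideal.pow_le_pow_right (Finset.le_sup hs) ha)
  exact hle hm

/-- `Γ_𝔞(M, N)` and `Hom_R(M, Γ_𝔞(N))` have the same image in `Hom_R(M, N)`. -/
lemma range_gammaToHom_eq [Module.Finite R M] :
    LinearMap.range (gammaToHom 𝔞 M N) =
      LinearMap.range (LinearMap.compRight R (M := M) (gammaToModule 𝔞 N)) := by
  ext f
  rw [mem_range_gammaToHom]
  constructor
  · rintro ⟨k, hk⟩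
    have hf : ∀ m, f m ∈ LinearMap.range (gammaToModule 𝔞 N) := fun m =>
      (mem_range_gammaToModule 𝔞 N _).2 ⟨k, fun a ha => hk a ha m⟩
    let e := LinearEquiv.ofInjective _ (gammaToModule_injective 𝔞 N)
    refine ⟨e.symm.toLinearMap ∘ₗ f.codRestrict _ hf, LinearMap.ext fun m => ?_⟩
    exact congrArg Subtype.val (e.apply_symm_apply ⟨f m, hf m⟩)
  · rintro ⟨g, rfl⟩
    exact exists_pow_smul_eq_zero 𝔞 M N _ fun m =>
      (mem_range_gammaToModule 𝔞 N _).1 ⟨g m, rfl⟩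

end

/-- for `M` finitely presented,
`Γ_𝔞(M,N) = colim_k Hom(M/𝔞^k M, N) ≅ Hom_R(M, Γ_𝔞(N))` where
`Γ_𝔞(N) = colim_k Hom(R/𝔞^k, N)`. -/
theorem gammaGen_iso_hom_gamma {R : Type*} [CommRing R] (𝔞 : Ideal R)
    (M N : Type*) [AddCommGroup M] [Module R M] [AddCommGroup N] [Module R N]
    [Module.FinitePresentation R M] :
    Nonempty
      ((Module.DirectLimit (fun k : ℕ => (M ⧸ ((𝔞 ^ k) • ⊤ : Submodule R M)) →ₗ[R] N)
          (fun k l h => LinearMap.lcomp R N (quotPowProj 𝔞 M k l h))) ≃ₗ[R]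
        (M →ₗ[R]
          Module.DirectLimit (fun k : ℕ => (R ⧸ ((𝔞 ^ k) • ⊤ : Submodule R R)) →ₗ[R] N)
            (fun k l h => LinearMap.lcomp R N (quotPowProj 𝔞 R k l h)))) := by
  have hinj : Function.Injective (LinearMap.compRight R (M := M) (gammaToModule 𝔞 N)) :=
    fun _ _ h => LinearMap.ext fun m =>
      gammaToModule_injective 𝔞 N (LinearMap.congr_fun h m)
  exact ⟨LinearEquiv.ofInjective _ (gammaToHom_injective 𝔞 M N) ≪≫ₗ
    LinearEquiv.ofEq _ _ (range_gammaToHom_eq 𝔞 M N) ≪≫ₗ (LinearEquiv.ofInjective _ hinj).symm⟩
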